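/- Second-order Herglotz Euler–Lagrange equation: If x ∈ C⁴([a,b],ℝ) extremizes z(b) where ż = L(t,x,ẋ,ẍ,z), z(a) = γ, with x(a), ẋ(a), x(b), ẋ(b) fixed, then L_x + L_z L_ẋ - (d/dt)L_ẋ + L_z² L_ẍ - 2 L_z (d/dt)L_ẍ - ((d/dt)L_z) L_ẍ + (d²/dt²)L_ẍ = 0 on [a,b], where all partial derivatives of L are evaluated at (t,x(t),ẋ(t),ẍ(t),z(t)). -/

import Mathlib

open Set Filter Topology

lemma hel_exists_sol (a b γ C : ℝ) (K : NNReal) (hab : a < b) (f : ℝ → ℝ → ℝ)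
    (hfc : Continuous (fun p : ℝ × ℝ => f p.1 p.2))
    (hK : ∀ t ∈ Icc (a-1) (b+1), LipschitzWith K (f t))
    (hC : ∀ t ∈ Icc (a-1) (b+1), ∀ w, |f t w| ≤ C) :
    ∃ w : ℝ → ℝ, w a = γ ∧ ∀ t ∈ Icc a b, HasDerivAt w (f t (w t)) t := by
  have hC0 : 0 ≤ C := le_trans (abs_nonneg _) (hC a ⟨by linarith, by linarith⟩ 0)
  have hT : 0 ≤ C * (b - a + 1) := mul_nonneg hC0 (by linarith)
  have hpl : IsPicardLindelof f (tmin := a-1) (tmax := b+1) ⟨a, by constructor <;> linarith⟩ γ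
      (⟨C * (b - a + 1), hT⟩ : NNReal) 0 ⟨C, hC0⟩ K := by
    refine ⟨fun t ht => (hK t ht).lipschitzOnWith, fun w _ => ?_, fun t ht w _ => hC t ht w, ?_⟩
    · exact (hfc.comp (by fun_prop : Continuous fun t : ℝ => (t, w))).continuousOn
    · show C * max (b + 1 - a) (a - (a - 1)) ≤ C * (b - a + 1) - 0
      rw [max_eq_left (by linarith)]
      linarith
  obtain ⟨w, hw, hd⟩ := hpl.exists_eq_forall_mem_Icc_hasDerivWithinAt₀
  refine ⟨w, hw, fun t ht => ?_⟩
  exact (hd t ⟨by linarith [ht.1], by linarith [ht.2]⟩).hasDerivAt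
    (Icc_mem_nhds (by linarith [ht.1]) (by linarith [ht.2]))

/-- uniform first order expansion -/
lemma hel_taylor (a b : ℝ) (G : ℝ × ℝ × ℝ → ℝ) (hG : ContDiff ℝ 1 G)
    (z ζ D : ℝ → ℝ) (hz : ContinuousOn z (Icc a b)) (hζ : ContinuousOn ζ (Icc a b))
    (hD : ∀ t ∈ Icc a b, HasDerivAt (fun s => G (s, t, z t + s * ζ t)) (D t) 0)
    (c : ℝ) (hc : 0 < c) :
    ∃ e > 0, ∀ s, |s| < e → ∀ t ∈ Icc a b,
      |G (s, t, z t + s * ζ t) - G (0, t, z t) - s * D t| ≤ c * |s| := by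
  set Ψ : ℝ → ℝ × ℝ × ℝ → ℝ := fun s p => fderiv ℝ G (s, p.1, p.2.1 + s * p.2.2) (1, 0, p.2.2) with hΨ
  have hΨc : Continuous (fun q : ℝ × ℝ × ℝ × ℝ => Ψ q.1 q.2) := by
    have h1 : Continuous (fun q : ℝ × ℝ × ℝ × ℝ => fderiv ℝ G (q.1, q.2.1, q.2.2.1 + q.1 * q.2.2.2)) :=
      (hG.continuous_fderiv (by norm_num)).comp (by fun_prop)
    exact h1.clm_apply (by fun_prop)
  have hder : ∀ (p : ℝ × ℝ × ℝ) (s : ℝ),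
      HasDerivAt (fun s => G (s, p.1, p.2.1 + s * p.2.2)) (Ψ s p) s := by
    intro p s
    have h1 : HasDerivAt (fun s : ℝ => ((s, p.1, p.2.1 + s * p.2.2) : ℝ × ℝ × ℝ)) (1, 0, p.2.2) s := by
      refine (hasDerivAt_id s).prodMk ((hasDerivAt_const s p.1).prodMk ?_)
      simpa using ((hasDerivAt_id s).mul_const p.2.2).const_add p.2.1
    exact ((hG.differentiable (by norm_num)) _).hasFDerivAt.comp_hasDerivAt s h1
  have hcomp : IsCompact (Set.image (fun t => (t, z t, ζ t)) (Icc a b)) :=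
    isCompact_Icc.image_of_continuousOn (continuousOn_id.prodMk (hz.prodMk hζ))
  have hev : ∀ᶠ s in 𝓝 (0:ℝ), ∀ p ∈ (Set.image (fun t => (t, z t, ζ t)) (Icc a b)), |Ψ s p - Ψ 0 p| < c := by
    apply hcomp.eventually_forall_of_forall_eventually
    intro p _
    have : Continuous (fun q : ℝ × ℝ × ℝ × ℝ => |Ψ q.1 q.2 - Ψ 0 q.2|) := by
      have := hΨc.comp (by fun_prop : Continuous fun q : ℝ × ℝ × ℝ × ℝ => ((0:ℝ), q.2))
      exact (hΨc.sub this).abs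
    have h2 := this.tendsto (0, p)
    exact h2.eventually_lt_const (by simpa using hc)
  obtain ⟨e, he, hball⟩ := Metric.eventually_nhds_iff.1 hev
  refine ⟨e, he, fun s hs t ht => ?_⟩
  have hDt : D t = Ψ 0 (t, z t, ζ t) := (hD t ht).unique (hder (t, z t, ζ t) 0)
  have key := (convex_ball (0:ℝ) e).norm_image_sub_le_of_norm_hasDerivWithin_le (C := c)
    (f := fun s => G (s, t, z t + s * ζ t) - s * D t)
    (f' := fun s => Ψ s (t, z t, ζ t) - D t) (x := 0) (y := s)
    (fun r _ => by
      have := (hder (t, z t, ζ t) r).sub ((hasDerivAt_id r).mul_const (D t))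
      simp only [one_mul] at this
      exact this.hasDerivWithinAt)
    (fun r hr => by
      rw [hDt]
      exact (hball (by simpa using hr) _ ⟨t, ht, rfl⟩).le)
    (by simpa using he) (by simpa using hs)
  simp only [Real.norm_eq_abs, sub_zero, zero_mul, add_zero] at key
  convert key using 2
  ring

lemma hel_flow (a b : ℝ) (hab : a < b) (G : ℝ × ℝ × ℝ → ℝ) (hG : ContDiff ℝ 1 G)
    (z ζ D : ℝ → ℝ) (hz : ∀ t ∈ Icc a b, HasDerivAt z (G (0, t, z t)) t)
    (hζ : ∀ t ∈ Icc a b, HasDerivAt ζ (D t) t) (hζa : ζ a = 0)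
    (hD : ∀ t ∈ Icc a b, HasDerivAt (fun s => G (s, t, z t + s * ζ t)) (D t) 0)
    (c : ℝ) (hc : 0 < c) :
    ∃ e > 0, ∀ s, |s| < e → ∃ w : ℝ → ℝ, w a = z a ∧
      (∀ t ∈ Icc a b, HasDerivAt w (G (s, t, w t)) t) ∧ |w b - z b - s * ζ b| ≤ c * |s| := by
  have hzc : ContinuousOn z (Icc a b) := fun t ht => (hz t ht).continuousAt.continuousWithinAt
  have hζc : ContinuousOn ζ (Icc a b) := fun t ht => (hζ t ht).continuousAt.continuousWithinAt
  obtain ⟨Mz, hMz⟩ := isCompact_Icc.exists_bound_of_continuousOn hzc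
  obtain ⟨Mζ, hMζ⟩ := isCompact_Icc.exists_bound_of_continuousOn hζc
  simp only [Real.norm_eq_abs] at hMz hMζ
  have hMz0 : 0 ≤ Mz := le_trans (abs_nonneg _) (hMz a ⟨le_rfl, hab.le⟩)
  have hMζ0 : 0 ≤ Mζ := le_trans (abs_nonneg _) (hMζ a ⟨le_rfl, hab.le⟩)
  set M := Mz + 1 with hM
  set S : Set (ℝ × ℝ × ℝ) := Icc (-1) 1 ×ˢ (Icc (a-1) (b+1) ×ˢ Icc (-M) M) with hS
  have hScomp : IsCompact S := isCompact_Icc.prod (isCompact_Icc.prod isCompact_Icc)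
  have hSconv : Convex ℝ S := (convex_Icc _ _).prod ((convex_Icc _ _).prod (convex_Icc _ _))
  obtain ⟨C, hC⟩ := hScomp.exists_bound_of_continuousOn hG.continuous.continuousOn
  obtain ⟨K0, hK0⟩ := hScomp.exists_bound_of_continuousOn
    (hG.continuous_fderiv (by norm_num)).continuousOn
  set K : NNReal := Real.toNNReal (max K0 1) with hKdef
  have hKr : (K:ℝ) = max K0 1 := Real.coe_toNNReal _ (le_trans zero_le_one (le_max_right _ _))
  have hK1 : (1:ℝ) ≤ K := by rw [hKr]; exact le_max_right _ _
  have hLip : LipschitzOnWith K G S := by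
    apply hSconv.lipschitzOnWith_of_nnnorm_fderiv_le (𝕜 := ℝ)
      (fun p _ => (hG.differentiable (by norm_num)) p)
    intro p hp
    rw [← NNReal.coe_le_coe, hKr]
    exact (hK0 p hp).trans (le_max_left _ _)
  set cl : ℝ → ℝ := fun w => max (-M) (min M w) with hcl
  have hclmem : ∀ w, cl w ∈ Icc (-M) M := fun w =>
    ⟨le_max_left _ _, max_le (by linarith) (min_le_left _ _)⟩
  have hclid : ∀ w, |w| ≤ M → cl w = w := by
    intro w hw
    have := abs_le.1 hw
    simp [hcl, min_eq_right this.2, max_eq_right this.1]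
  have hcllip : LipschitzWith 1 cl := (LipschitzWith.id.const_min M).const_max (-M)
  set B := (Real.exp (K * (b - a))) with hB
  have hBpos : 0 < B := Real.exp_pos _
  have hc' : 0 < min c 1 / B := by positivity
  obtain ⟨e, he, hT⟩ := hel_taylor a b G hG z ζ D hzc hζc hD (min c 1 / B) hc'
  set e' := min e (1 / (2 * (Mζ + 1))) with he'
  refine ⟨e', by positivity, fun s hs => ?_⟩
  have hs1 : |s| < e := lt_of_lt_of_le hs (min_le_left _ _)
  have hs2 : |s| * (Mζ + 1) < 1/2 := by
    have := lt_of_lt_of_le hs (min_le_right _ _)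
    rw [lt_div_iff₀ (by positivity)] at this
    linarith
  have hs3 : |s| < 1/2 := by nlinarith [abs_nonneg s]
  have hsm : s ∈ Icc (-1:ℝ) 1 := by
    have := abs_lt.1 hs3
    constructor <;> linarith
  have hmem : ∀ t ∈ Icc (a-1) (b+1), ∀ w, (s, t, cl w) ∈ S := fun t ht w => ⟨hsm, ht, hclmem w⟩
  have hvL : ∀ t ∈ Icc (a-1) (b+1), LipschitzWith K (fun w => G (s, t, cl w)) := by
    intro t ht
    apply LipschitzWith.of_dist_le_mul
    intro w w'
    refine (hLip.dist_le_mul _ (hmem t ht w) _ (hmem t ht w')).trans ?_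
    gcongr
    have := hcllip.dist_le_mul w w'
    simp only [Prod.dist_eq, dist_self]
    simpa using this
  obtain ⟨w, hwa, hw⟩ := hel_exists_sol a b (z a) C K hab (fun t w => G (s, t, cl w))
    (hG.continuous.comp (by have := hcllip.continuous; fun_prop)) hvL
    (fun t ht w => hC _ (hmem t ht w))
  have hsζ : ∀ t ∈ Icc a b, |s * ζ t| ≤ 1/2 := by
    intro t ht
    rw [abs_mul]
    nlinarith [hMζ t ht, abs_nonneg s]
  have hgM : ∀ t ∈ Icc a b, |z t + s * ζ t| ≤ Mz + 1/2 := fun t ht =>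
    (abs_add_le _ _).trans (add_le_add (hMz t ht) (hsζ t ht))
  have hgr := dist_le_of_approx_trajectories_ODE_of_mem (K := K) (a := a) (b := b)
    (v := fun t w => G (s, t, cl w)) (s := fun _ => univ) (f := w) (g := fun t => z t + s * ζ t)
    (f' := fun t => G (s, t, cl (w t))) (g' := fun t => G (0, t, z t) + s * D t)
    (εf := 0) (εg := min c 1 / B * |s|) (δ := 0)
    (fun t ht => (hvL t ⟨by linarith [ht.1], by linarith [ht.2]⟩).lipschitzOnWith)
    (fun t ht => (hw t ht).continuousAt.continuousWithinAt)
    (fun t ht => (hw t (Ico_subset_Icc_self ht)).hasDerivWithinAt)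
    (fun t ht => by simp) (fun _ _ => trivial)
    (hzc.add (continuousOn_const.mul hζc))
    (fun t ht => ((hz t (Ico_subset_Icc_self ht)).add
      ((hζ t (Ico_subset_Icc_self ht)).const_mul s)).hasDerivWithinAt)
    (fun t ht => by
      have ht' := Ico_subset_Icc_self ht
      rw [hclid _ ((hgM t ht').trans (by linarith)), dist_comm, Real.dist_eq]
      refine le_trans (le_of_eq ?_) (hT s hs1 t ht')
      congr 1; ring)
    (fun _ _ => trivial) (by simp [hwa, hζa])
  have hbd : ∀ t ∈ Icc a b, |w t - (z t + s * ζ t)| ≤ min c 1 * |s| := by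
    intro t ht
    have h := hgr t ht
    rw [gronwallBound_of_K_ne_0 (by linarith), Real.dist_eq] at h
    refine h.trans ?_
    have hexp : Real.exp (K * (t - a)) ≤ B := by
      apply Real.exp_le_exp.2
      exact mul_le_mul_of_nonneg_left (by linarith [ht.2]) (by linarith)
    have hq : 0 ≤ min c 1 / B * |s| := by positivity
    have h3 : (min c 1 / B * |s|) / K ≤ min c 1 / B * |s| := div_le_self hq hK1
    have h5 : 1 ≤ Real.exp (K * (t - a)) := Real.one_le_exp (mul_nonneg (by linarith) (by linarith [ht.1]))
    have h4 : (min c 1 / B * |s|) * B = min c 1 * |s| := by field_simp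
    simp only [zero_mul, zero_add]
    calc _ ≤ (min c 1 / B * |s|) * (Real.exp (K * (t - a)) - 1) := by gcongr
      _ ≤ (min c 1 / B * |s|) * B := by gcongr; linarith
      _ = _ := h4
  refine ⟨w, hwa, fun t ht => ?_, ?_⟩
  · have h1 := hbd t ht
    have h2 : min c 1 * |s| ≤ 1/2 := by
      nlinarith [min_le_right c 1, abs_nonneg s]
    have h3 : |w t| ≤ M := by
      have := abs_add_le (w t - (z t + s * ζ t)) (z t + s * ζ t)
      rw [sub_add_cancel] at this
      linarith [hgM t ht]
    have := hw t ht
    simp only [hclid _ h3] at this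
    exact this
  · have h1 := hbd b ⟨hab.le, le_rfl⟩
    have h2 : min c 1 * |s| ≤ c * |s| := by gcongr; exact min_le_left _ _
    rw [sub_sub]; linarith

set_option maxHeartbeats 2000000 in
/-- Second-order Herglotz Euler–Lagrange equation (the case n = 2). -/
theorem herglotz_euler_lagrange_second_order
    (a b γ : ℝ) (hab : a < b)
    (L : ℝ → ℝ → ℝ → ℝ → ℝ → ℝ)
    (hL : ContDiff ℝ 1
      (fun p : ℝ × ℝ × ℝ × ℝ × ℝ => L p.1 p.2.1 p.2.2.1 p.2.2.2.1 p.2.2.2.2))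
    (x z : ℝ → ℝ) (hx : ContDiff ℝ 4 x)
    (hz : ∀ t ∈ Set.Icc a b,
      HasDerivAt z (L t (x t) (deriv x t) (iteratedDeriv 2 x t) (z t)) t)
    (hza : z a = γ)
    -- partial derivatives of L along the trajectory
    (Lx Lv Lw Lz : ℝ → ℝ)
    (hLx : ∀ t, Lx t = deriv (fun u => L t u (deriv x t) (iteratedDeriv 2 x t) (z t)) (x t))
    (hLv : ∀ t, Lv t = deriv (fun u => L t (x t) u (iteratedDeriv 2 x t) (z t)) (deriv x t))
    (hLw : ∀ t, Lw t = deriv (fun u => L t (x t) (deriv x t) u (z t)) (iteratedDeriv 2 x t))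
    (hLz : ∀ t, Lz t = deriv (fun u => L t (x t) (deriv x t) (iteratedDeriv 2 x t) u) (z t))
    (hLv2 : ContDiff ℝ 2 Lv) (hLw2 : ContDiff ℝ 2 Lw) (hLz2 : ContDiff ℝ 2 Lz)
    -- x extremizes z(b) with x(a), ẋ(a), x(b), ẋ(b) fixed
    (hext :
      (∀ y w : ℝ → ℝ, ContDiff ℝ 4 y →
        y a = x a → deriv y a = deriv x a → y b = x b → deriv y b = deriv x b →
        (∀ t ∈ Set.Icc a b,
          HasDerivAt w (L t (y t) (deriv y t) (iteratedDeriv 2 y t) (w t)) t) →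
        w a = γ → z b ≤ w b) ∨
      (∀ y w : ℝ → ℝ, ContDiff ℝ 4 y →
        y a = x a → deriv y a = deriv x a → y b = x b → deriv y b = deriv x b →
        (∀ t ∈ Set.Icc a b,
          HasDerivAt w (L t (y t) (deriv y t) (iteratedDeriv 2 y t) (w t)) t) →
        w a = γ → w b ≤ z b)) :
    ∀ t ∈ Set.Icc a b,
      Lx t + Lz t * Lv t - deriv Lv t + (Lz t) ^ 2 * Lw t
        - 2 * Lz t * deriv Lw t - deriv Lz t * Lw t + deriv (deriv Lw) t = 0 := by
  have h2 : ∀ f : ℝ → ℝ, iteratedDeriv 2 f = deriv (deriv f) := fun f => by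
    rw [iteratedDeriv_succ, iteratedDeriv_one]
  simp only [h2] at *
  have hzc : ContinuousOn z (Icc a b) := fun t ht => (hz t ht).continuousAt.continuousWithinAt
  have hx1 : ContDiff ℝ 3 (deriv x) := ContDiff.deriv' hx
  have hx2 : ContDiff ℝ 2 (deriv (deriv x)) := ContDiff.deriv' hx1
  have hLv1 : ContDiff ℝ 1 (deriv Lv) := ContDiff.deriv' hLv2
  have hLw1 : ContDiff ℝ 1 (deriv Lw) := ContDiff.deriv' hLw2
  have hLz1 : ContDiff ℝ 1 (deriv Lz) := ContDiff.deriv' hLz2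
  have hLw0 : ContDiff ℝ 0 (deriv (deriv Lw)) := ContDiff.deriv' hLw1
  set F : ℝ × ℝ × ℝ × ℝ × ℝ → ℝ := fun p => L p.1 p.2.1 p.2.2.1 p.2.2.2.1 p.2.2.2.2 with hF
  set P : ℝ → ℝ × ℝ × ℝ × ℝ × ℝ := fun t => (t, x t, deriv x t, deriv (deriv x) t, z t) with hP
  have hFd : ∀ p, HasFDerivAt F (fderiv ℝ F p) p := fun p =>
    (hL.differentiable (by norm_num) p).hasFDerivAt
  have eLx : ∀ t, Lx t = fderiv ℝ F (P t) (0, 1, 0, 0, 0) := by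
    intro t
    rw [hLx]
    have hc : HasDerivAt (fun u : ℝ => ((t, u, deriv x t, deriv (deriv x) t, z t) : ℝ × ℝ × ℝ × ℝ × ℝ)) (0, 1, 0, 0, 0) (x t) :=
      ((hasDerivAt_const _ t).prodMk ((hasDerivAt_id (x t)).prodMk
        ((hasDerivAt_const _ _).prodMk ((hasDerivAt_const _ _).prodMk
          (hasDerivAt_const _ _)))))
    have h1 : HasFDerivAt F (fderiv ℝ F (P t))
        ((fun u : ℝ => ((t, u, deriv x t, deriv (deriv x) t, z t) : ℝ × ℝ × ℝ × ℝ × ℝ)) (x t)) := hFd (P t)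
    exact (h1.comp_hasDerivAt (x t) hc).deriv
  have eLv : ∀ t, Lv t = fderiv ℝ F (P t) (0, 0, 1, 0, 0) := by
    intro t
    rw [hLv]
    have hc : HasDerivAt (fun u : ℝ => ((t, x t, u, deriv (deriv x) t, z t) : ℝ × ℝ × ℝ × ℝ × ℝ)) (0, 0, 1, 0, 0) (deriv x t) :=
      ((hasDerivAt_const _ t).prodMk ((hasDerivAt_const _ _).prodMk
        ((hasDerivAt_id (deriv x t)).prodMk ((hasDerivAt_const _ _).prodMk
          (hasDerivAt_const _ _)))))
    have h1 : HasFDerivAt F (fderiv ℝ F (P t))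
        ((fun u : ℝ => ((t, x t, u, deriv (deriv x) t, z t) : ℝ × ℝ × ℝ × ℝ × ℝ)) (deriv x t)) := hFd (P t)
    exact (h1.comp_hasDerivAt (deriv x t) hc).deriv
  have eLw : ∀ t, Lw t = fderiv ℝ F (P t) (0, 0, 0, 1, 0) := by
    intro t
    rw [hLw]
    have hc : HasDerivAt (fun u : ℝ => ((t, x t, deriv x t, u, z t) : ℝ × ℝ × ℝ × ℝ × ℝ)) (0, 0, 0, 1, 0) (deriv (deriv x) t) :=
      ((hasDerivAt_const _ t).prodMk ((hasDerivAt_const _ _).prodMk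
        ((hasDerivAt_const _ _).prodMk ((hasDerivAt_id (deriv (deriv x) t)).prodMk
          (hasDerivAt_const _ _)))))
    have h1 : HasFDerivAt F (fderiv ℝ F (P t))
        ((fun u : ℝ => ((t, x t, deriv x t, u, z t) : ℝ × ℝ × ℝ × ℝ × ℝ)) (deriv (deriv x) t)) := hFd (P t)
    exact (h1.comp_hasDerivAt (deriv (deriv x) t) hc).deriv
  have eLz : ∀ t, Lz t = fderiv ℝ F (P t) (0, 0, 0, 0, 1) := by
    intro t
    rw [hLz]
    have hc : HasDerivAt (fun u : ℝ => ((t, x t, deriv x t, deriv (deriv x) t, u) : ℝ × ℝ × ℝ × ℝ × ℝ)) (0, 0, 0, 0, 1) (z t) :=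
      ((hasDerivAt_const _ t).prodMk ((hasDerivAt_const _ _).prodMk
        ((hasDerivAt_const _ _).prodMk ((hasDerivAt_const _ _).prodMk
          (hasDerivAt_id (z t))))))
    have h1 : HasFDerivAt F (fderiv ℝ F (P t))
        ((fun u : ℝ => ((t, x t, deriv x t, deriv (deriv x) t, u) : ℝ × ℝ × ℝ × ℝ × ℝ)) (z t)) := hFd (P t)
    exact (h1.comp_hasDerivAt (z t) hc).deriv
  have hLxc : ContinuousOn Lx (Icc a b) := by
    have hPc : ContinuousOn P (Icc a b) :=
      continuousOn_id.prodMk (hx.continuous.continuousOn.prodMk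
        (hx1.continuous.continuousOn.prodMk (hx2.continuous.continuousOn.prodMk hzc)))
    have h1 : ContinuousOn (fun t => fderiv ℝ F (P t)) (Icc a b) :=
      (hL.continuous_fderiv (by norm_num)).comp_continuousOn hPc
    have h3 : Lx = fun t => fderiv ℝ F (P t) (0, 1, 0, 0, 0) := funext eLx
    rw [h3]
    exact h1.clm_apply continuousOn_const
  -- a continuous extension of Lx
  set X : ℝ → ℝ := IccExtend hab.le (fun t : Icc a b => Lx t) with hX
  have hXc : Continuous X := (continuousOn_iff_continuous_domRestrict.1 hLxc).Icc_extend'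
  have hXe : ∀ t ∈ Icc a b, X t = Lx t := fun t ht => IccExtend_of_mem hab.le _ ht
  clear_value X
  have hLzc : Continuous Lz := hLz2.continuous
  set Λ : ℝ → ℝ := fun t => ∫ s in a..t, Lz s with hΛ
  have hΛd : ∀ t, HasDerivAt Λ (Lz t) t := fun t => (hLzc.integral_hasStrictDerivAt a t).hasDerivAt
  have hΛc : Continuous Λ := continuous_iff_continuousAt.2 fun t => (hΛd t).continuousAt
  clear_value Λ
  set E : ℝ → ℝ := fun t => X t + Lz t * Lv t - deriv Lv t + (Lz t) ^ 2 * Lw t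
        - 2 * Lz t * deriv Lw t - deriv Lz t * Lw t + deriv (deriv Lw) t with hE
  have hEc : Continuous E := by
    have := hLv2.continuous
    have := hLw2.continuous
    have := hLv1.continuous
    have := hLw1.continuous
    have := hLz1.continuous
    have := hLw0.continuous
    fun_prop
  have main : ∀ η : ℝ → ℝ, ContDiff ℝ (⊤ : ℕ∞) η → tsupport η ⊆ Ioo a b →
      ∫ t in a..b, η t * (Real.exp (-Λ t) * E t) = 0 := by
    intro η hη hsupp
    have hη4 : ContDiff ℝ 4 η := contDiff_infty.1 hη 4
    have hη3 : ContDiff ℝ 3 (deriv η) := ContDiff.deriv' hη4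
    have hη2 : ContDiff ℝ 2 (deriv (deriv η)) := ContDiff.deriv' hη3
    have haN : a ∉ tsupport η := fun h => lt_irrefl _ (hsupp h).1
    have hbN : b ∉ tsupport η := fun h => lt_irrefl _ (hsupp h).2
    have ηa : η a = 0 := image_eq_zero_of_notMem_tsupport haN
    have ηb : η b = 0 := image_eq_zero_of_notMem_tsupport hbN
    have ηa' : deriv η a = 0 := by
      by_contra h
      exact haN (support_deriv_subset h)
    have ηb' : deriv η b = 0 := by
      by_contra h
      exact hbN (support_deriv_subset h)
    have c0 := hη4.continuous
    have c1 := hη3.continuous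
    have c2 := hη2.continuous
    have cv := hLv2.continuous
    have cw := hLw2.continuous
    set g : ℝ → ℝ := fun t => X t * η t + Lv t * deriv η t + Lw t * deriv (deriv η) t with hg
    have hgc : Continuous g := by fun_prop
    have hmc : Continuous (fun t => Real.exp (-Λ t) * g t) := by fun_prop
    set I : ℝ → ℝ := fun t => ∫ s in a..t, Real.exp (-Λ s) * g s with hI
    have hId : ∀ t, HasDerivAt I (Real.exp (-Λ t) * g t) t :=
      fun t => (hmc.integral_hasStrictDerivAt a t).hasDerivAt
    have hIa : I a = 0 := intervalIntegral.integral_same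
    set ζ : ℝ → ℝ := fun t => Real.exp (Λ t) * I t with hζ
    have hζd : ∀ t, HasDerivAt ζ (g t + Lz t * ζ t) t := by
      intro t
      refine ((hΛd t).exp.mul (hId t)).congr_deriv ?_
      have : Real.exp (Λ t) * Real.exp (-Λ t) = 1 := by rw [← Real.exp_add]; simp
      simp only [hζ]
      linear_combination g t * this
    have hζa : ζ a = 0 := by simp [hζ, hIa]
    -- the perturbed vector field
    set G : ℝ × ℝ × ℝ → ℝ := fun q => F (q.2.1, x q.2.1 + q.1 * η q.2.1,
      deriv x q.2.1 + q.1 * deriv η q.2.1,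
      deriv (deriv x) q.2.1 + q.1 * deriv (deriv η) q.2.1, q.2.2) with hG
    have hGd : ContDiff ℝ 1 G := by
      have x0 : ContDiff ℝ 1 x := hx.of_le (by norm_num)
      have x1 : ContDiff ℝ 1 (deriv x) := hx1.of_le (by norm_num)
      have x2 : ContDiff ℝ 1 (deriv (deriv x)) := hx2.of_le (by norm_num)
      have n0 : ContDiff ℝ 1 η := hη4.of_le (by norm_num)
      have n1 : ContDiff ℝ 1 (deriv η) := hη3.of_le (by norm_num)
      have n2 : ContDiff ℝ 1 (deriv (deriv η)) := hη2.of_le (by norm_num)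
      exact hL.comp (by fun_prop)
    have hzG : ∀ t ∈ Icc a b, HasDerivAt z (G (0, t, z t)) t := by
      intro t ht
      simpa [hG, hF] using hz t ht
    have hDG : ∀ t ∈ Icc a b,
        HasDerivAt (fun s => G (s, t, z t + s * ζ t)) (g t + Lz t * ζ t) 0 := by
      intro t ht
      have lin : ∀ u v : ℝ, HasDerivAt (fun s : ℝ => u + s * v) v 0 := fun u v => by
        simpa using ((hasDerivAt_id (0:ℝ)).mul_const v).const_add u
      have hcurve : HasDerivAt (fun s : ℝ => ((t, x t + s * η t, deriv x t + s * deriv η t,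
          deriv (deriv x) t + s * deriv (deriv η) t, z t + s * ζ t) : ℝ × ℝ × ℝ × ℝ × ℝ))
          (0, η t, deriv η t, deriv (deriv η) t, ζ t) 0 :=
        (hasDerivAt_const _ t).prodMk ((lin _ _).prodMk ((lin _ _).prodMk
          ((lin _ _).prodMk (lin _ _))))
      have h0 : HasFDerivAt F (fderiv ℝ F (P t)) ((fun s : ℝ => ((t, x t + s * η t,
          deriv x t + s * deriv η t,
          deriv (deriv x) t + s * deriv (deriv η) t, z t + s * ζ t) : ℝ × ℝ × ℝ × ℝ × ℝ)) 0) := by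
        simpa [hP] using hFd (P t)
      refine (h0.comp_hasDerivAt 0 hcurve).congr_deriv ?_
      have hdec : ((0, η t, deriv η t, deriv (deriv η) t, ζ t) : ℝ × ℝ × ℝ × ℝ × ℝ) =
          η t • (0, 1, 0, 0, 0) + deriv η t • (0, 0, 1, 0, 0)
          + deriv (deriv η) t • (0, 0, 0, 1, 0) + ζ t • (0, 0, 0, 0, 1) := by
        simp
      rw [hdec, map_add, map_add, map_add, map_smul, map_smul, map_smul, map_smul,
        ← eLx, ← eLv, ← eLw, ← eLz]
      simp only [hg, hXe t ht, smul_eq_mul]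
      ring
    -- admissibility of the variations
    have hadm : ∀ s : ℝ, ∀ w : ℝ → ℝ, (∀ t ∈ Icc a b, HasDerivAt w (G (s, t, w t)) t) →
        w a = z a → ∃ y : ℝ → ℝ, ContDiff ℝ 4 y ∧ y a = x a ∧ deriv y a = deriv x a ∧
          y b = x b ∧ deriv y b = deriv x b ∧ (∀ t ∈ Set.Icc a b,
          HasDerivAt w (L t (y t) (deriv y t) (deriv (deriv y) t) (w t)) t) ∧ w a = γ := by
      intro s w hw hwa
      have d1 : deriv (fun t => x t + s * η t) = fun t => deriv x t + s * deriv η t := by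
        funext t
        exact ((hx.differentiable (by norm_num) t).hasDerivAt.add
          ((hη4.differentiable (by norm_num) t).hasDerivAt.const_mul s)).deriv
      have d2 : deriv (fun t => deriv x t + s * deriv η t)
          = fun t => deriv (deriv x) t + s * deriv (deriv η) t := by
        funext t
        exact ((hx1.differentiable (by norm_num) t).hasDerivAt.add
          ((hη3.differentiable (by norm_num) t).hasDerivAt.const_mul s)).deriv
      refine ⟨fun t => x t + s * η t, by fun_prop, by simp [ηa], by simp [d1, ηa'], by simp [ηb],
        by simp [d1, ηb'], ?_, hwa.trans hza⟩
      rw [d1, d2]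
      exact hw
    have hζb : ζ b = 0 := by
      by_contra hne
      have hpos : 0 < |ζ b| := abs_pos.2 hne
      obtain ⟨e, he, hflow⟩ := hel_flow a b hab G hGd z ζ (fun t => g t + Lz t * ζ t) hzG
        (fun t _ => hζd t) hζa hDG (|ζ b| / 2) (by positivity)
      -- values on both sides
      have hboth : ∀ s, |s| < e → ∃ w : ℝ → ℝ, |w b - z b - s * ζ b| ≤ |ζ b| / 2 * |s| ∧
          ∃ y : ℝ → ℝ, ContDiff ℝ 4 y ∧ y a = x a ∧ deriv y a = deriv x a ∧
          y b = x b ∧ deriv y b = deriv x b ∧ (∀ t ∈ Set.Icc a b,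
          HasDerivAt w (L t (y t) (deriv y t) (deriv (deriv y) t) (w t)) t) ∧ w a = γ := by
        intro s hs
        obtain ⟨w, hwa, hw, hwb⟩ := hflow s hs
        exact ⟨w, hwb, hadm s w hw hwa⟩
      obtain ⟨r, hr, hrζ⟩ : ∃ r : ℝ, |r| = e / 2 ∧ r * ζ b = e / 2 * |ζ b| := by
        rcases lt_or_gt_of_ne hne with h | h
        · exact ⟨-(e/2), by rw [abs_neg, abs_of_pos (by linarith)], by rw [abs_of_neg h]; ring⟩
        · exact ⟨e/2, abs_of_pos (by linarith), by rw [abs_of_pos h]⟩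
      have hep : 0 < e * |ζ b| := by positivity
      rcases hext with h | h
      · obtain ⟨w, hwb, y, y1, y2, y3, y4, y5, y6, y7⟩ := hboth (-r) (by rw [abs_neg, hr]; linarith)
        have h1 := h y w y1 y2 y3 y4 y5 y6 y7
        have h3 := (abs_le.1 hwb).2
        rw [abs_neg, hr] at h3
        nlinarith
      · obtain ⟨w, hwb, y, y1, y2, y3, y4, y5, y6, y7⟩ := hboth r (by rw [hr]; linarith)
        have h1 := h y w y1 y2 y3 y4 y5 y6 y7
        have h3 := (abs_le.1 hwb).1
        rw [hr] at h3
        nlinarith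
    have hIb : ∫ s in a..b, Real.exp (-Λ s) * g s = 0 := by
      rcases mul_eq_zero.1 hζb with h | h
      · exact absurd h (Real.exp_ne_zero _)
      · exact h
    -- integration by parts
    set Q : ℝ → ℝ := fun t => Real.exp (-Λ t) *
      (Lv t * η t + Lw t * deriv η t - (deriv Lw t - Lz t * Lw t) * η t) with hQ
    have hQd : ∀ t, HasDerivAt Q (Real.exp (-Λ t) * g t - η t * (Real.exp (-Λ t) * E t)) t := by
      intro t
      have e1 := (hΛd t).neg.exp
      have v1 := (hLv2.differentiable (by norm_num) t).hasDerivAt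
      have w1 := (hLw2.differentiable (by norm_num) t).hasDerivAt
      have w2 := (hLw1.differentiable (by norm_num) t).hasDerivAt
      have z1 := (hLz2.differentiable (by norm_num) t).hasDerivAt
      have n1 := (hη4.differentiable (by norm_num) t).hasDerivAt
      have n2 := (hη3.differentiable (by norm_num) t).hasDerivAt
      refine (e1.mul (((v1.mul n1).add (w1.mul n2)).sub
        ((w2.sub (z1.mul w1)).mul n1))).congr_deriv ?_
      simp only [hg, hE, Pi.neg_apply, Pi.add_apply, Pi.sub_apply, Pi.mul_apply]
      ring
    have hic : Continuous (fun t => η t * (Real.exp (-Λ t) * E t)) := by fun_prop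
    have hint := intervalIntegral.integral_eq_sub_of_hasDerivAt (a := a) (b := b)
      (fun t _ => hQd t) ((hmc.sub hic).intervalIntegrable a b)
    rw [intervalIntegral.integral_sub (hmc.intervalIntegrable a b) (hic.intervalIntegrable a b),
      hIb] at hint
    simp only [hQ, ηa, ηb, ηa', ηb'] at hint
    linarith
  have hcE : Continuous (fun t => Real.exp (-Λ t) * E t) := by fun_prop
  have hae : ∀ᵐ t ∂(MeasureTheory.volume : MeasureTheory.Measure ℝ),
      t ∈ Ioo a b → Real.exp (-Λ t) * E t = 0 := by
    apply isOpen_Ioo.ae_eq_zero_of_integral_contDiff_smul_eq_zero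
      (hcE.locallyIntegrable.locallyIntegrableOn _)
    intro η hη _ hsupp
    rw [← main η hη hsupp]
    simp only [smul_eq_mul]
    symm
    apply intervalIntegral.integral_eq_integral_of_support_subset
    intro t ht
    have : t ∈ Function.support η := fun h => ht (by simp [h])
    exact Ioo_subset_Ioc_self (hsupp (subset_tsupport _ this))
  have hEq : EqOn (fun t => Real.exp (-Λ t) * E t) (fun _ => 0) (Ioo a b) := by
    apply MeasureTheory.Measure.eqOn_open_of_ae_eq (μ := MeasureTheory.volume) _ isOpen_Ioo
      hcE.continuousOn continuousOn_const
    exact (MeasureTheory.ae_restrict_iff' measurableSet_Ioo).2 hae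
  have hEq2 := hEq.closure hcE continuous_const
  rw [closure_Ioo hab.ne] at hEq2
  intro t ht
  have h := hEq2 ht
  rcases mul_eq_zero.1 h with h | h
  · exact absurd h (Real.exp_ne_zero _)
  · rw [← hXe t ht]; exact h
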